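/- Ellipticity of the invariant measure (Proposition 6.2): Let μ ≥ 1 and a, r : ℝ → ℝ continuous with 1/μ ≤ a(x) ≤ μ and |r(x)| ≤ μ for all x, let γ > γ̲, and let φ_γ and φ̃_γ be generalized principal eigenfunctions. Define ν_γ(x) := φ_γ(x)·φ̃_γ(x). Then inf_{x ∈ ℝ} ν_γ(x) > 0 and sup_{x ∈ ℝ} ν_γ(x) < ∞. -/

import Mathlib

open MeasureTheory Filter

/-- The generalized principal eigenvalue `γ̲`: the supremum over nonzero compactly
supported `C¹` functions `φ` of the Rayleigh quotient
`(∫ (r φ² − a (φ')²))/(∫ φ²)`. -/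
noncomputable def gammaBar (a r : ℝ → ℝ) : ℝ :=
  sSup {c : ℝ | ∃ φ : ℝ → ℝ, ContDiff ℝ 1 φ ∧ HasCompactSupport φ ∧ φ ≠ 0 ∧
    c = (∫ x : ℝ, (r x * φ x ^ 2 - a x * deriv φ x ^ 2)) / ∫ x : ℝ, φ x ^ 2}

/-- A generalized principal eigenfunction `φ` (with explicit derivative `φ'`):
positive, `φ(0) = 1`, `(aφ')' + (r − γ)φ = 0` pointwise, and `φ → 0` along the
filter `l` (`atTop` for `φ_γ`, `atBot` for `φ̃_γ`). -/
def IsGenPrincEig (a r : ℝ → ℝ) (γ : ℝ) (l : Filter ℝ) (φ φ' : ℝ → ℝ) : Prop :=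
  (∀ x, 0 < φ x) ∧ φ 0 = 1 ∧
  (∀ x, HasDerivAt φ (φ' x) x) ∧
  (∀ x, HasDerivAt (fun y => a y * φ' y) ((γ - r x) * φ x) x) ∧
  Tendsto φ l (nhds 0)

/-!
Both eigenfunctions `u = φ_γ` and `v = φ̃_γ` are positive solutions of `(a w')' = (γ - r) w`, so
their Wronskian `W = a (u v' - v u')` is constant, and their logarithmic derivatives are bounded.
The latter gives `W ≤ 2 K u v`, hence the lower bound once `W > 0`; it also gives a Harnack
inequality.

The gap `γ - γ̲ > 0` enters through one energy estimate: if `z` is bounded and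
`(a z')' = (γ - r) z - f` with `z f ≥ 0`, then `(γ - γ̲) ∫ z² ≤ ∫ z f`, as one sees by testing `γ̲`
with `χ z` for slowly varying cutoffs `χ`. For `f = 0` no bounded positive solution can exist; if
`W ≤ 0`, then `v / u` would be nonincreasing and `v` would be such a solution.

For the upper bound at `x₀`, rescale `v` so that `u x₀ = v x₀` and apply the estimate to
`z = u v / (u + v)`. It is a smooth substitute for `min u v`, so it is bounded and comparable to
`u x₀` near `x₀`, while `∫ z f ≤ W / 3`. Therefore `u x₀ ^ 2` is at most a constant times `W`.
-/

section RealAnalysis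

lemma integrable_of_hasDerivAt_of_mem_Icc {G g : ℝ → ℝ} {m M : ℝ}
    (hG : ∀ x, HasDerivAt G (g x) x) (hg : 0 ≤ g) (hGmem : ∀ x, G x ∈ Set.Icc m M) :
    Integrable g := by
  have hint (b c : ℝ) : IntervalIntegrable g volume b c :=
    intervalIntegral.intervalIntegrable_deriv_of_nonneg
      (fun x _ => (hG x).continuousAt.continuousWithinAt) (fun x _ => hG x) fun x _ => hg x
  have hnorm x : ‖g x‖ = g x := Real.norm_of_nonneg (hg x)
  refine integrable_of_intervalIntegral_norm_bounded (M - m) (fun i : ℝ => (hint (-i) i).1)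
    tendsto_neg_atTop_atBot tendsto_id (Eventually.of_forall fun i => ?_)
  simp only [hnorm]
  rw [intervalIntegral.integral_eq_sub_of_hasDerivAt (fun x _ => hG x) (hint (-i) i)]
  exact sub_le_sub (hGmem i).2 (hGmem (-i)).1

lemma integral_le_of_hasDerivAt_of_mem_Icc {G g : ℝ → ℝ} {m M : ℝ}
    (hG : ∀ x, HasDerivAt G (g x) x) (hg : 0 ≤ g) (hGmem : ∀ x, G x ∈ Set.Icc m M) :
    ∫ x, g x ≤ M - m := by
  have hmono : Monotone G := monotone_of_hasDerivAt_nonneg hG hg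
  have htop := tendsto_atTop_ciSup hmono ⟨M, Set.forall_mem_range.2 fun x => (hGmem x).2⟩
  have hbot := tendsto_atBot_ciInf hmono ⟨m, Set.forall_mem_range.2 fun x => (hGmem x).1⟩
  rw [integral_of_hasDerivAt_of_tendsto hG (integrable_of_hasDerivAt_of_mem_Icc hG hg hGmem)
    hbot htop]
  exact sub_le_sub (ciSup_le fun x => (hGmem x).2) (le_ciInf fun x => (hGmem x).1)

lemma bddAbove_range_of_isBoundedUnder {z : ℝ → ℝ} (hz : Continuous z)
    (htop : IsBoundedUnder (· ≤ ·) atTop z) (hbot : IsBoundedUnder (· ≤ ·) atBot z) :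
    BddAbove (Set.range z) := by
  obtain ⟨B, hB⟩ := htop
  obtain ⟨B', hB'⟩ := hbot
  obtain ⟨N, hN⟩ := eventually_atTop.1 (eventually_map.1 hB)
  obtain ⟨N', hN'⟩ := eventually_atBot.1 (eventually_map.1 hB')
  refine ((isCompact_Icc (a := N') (b := N)).bddAbove_image hz.continuousOn |>.union
    (bddAbove_Iic (a := max B B'))).mono ?_
  rintro _ ⟨x, rfl⟩
  rcases le_total N x with h | h
  · exact .inr (le_max_of_le_left (hN x h))
  rcases le_total x N' with h' | h'
  · exact .inr (le_max_of_le_right (hN' x h'))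
  · exact .inl ⟨x, ⟨h', h⟩, rfl⟩

lemma exp_neg_mul_abs_sub_mul_le {u u' : ℝ → ℝ} {k : ℝ} (hpos : ∀ x, 0 < u x)
    (hu : ∀ x, HasDerivAt u (u' x) x) (hk : ∀ x, |u' x| ≤ k * u x) (x y : ℝ) :
    Real.exp (-(k * |x - y|)) * u y ≤ u x := by
  have hlog : ∀ t, HasDerivAt (fun s => Real.log (u s)) (u' t / u t) t :=
    fun t => (hu t).log (hpos t).ne'
  have hbound : ∀ t, ‖u' t / u t‖ ≤ k := fun t => by
    rw [Real.norm_eq_abs, abs_div, abs_of_pos (hpos t), div_le_iff₀ (hpos t)]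
    exact hk t
  have hlip := convex_univ.norm_image_sub_le_of_norm_hasDerivWithin_le
    (fun t _ => (hlog t).hasDerivWithinAt) (fun t _ => hbound t) (Set.mem_univ y) (Set.mem_univ x)
  rw [← Real.log_le_log_iff (mul_pos (Real.exp_pos _) (hpos y)) (hpos x),
    Real.log_mul (Real.exp_pos _).ne' (hpos y).ne', Real.log_exp]
  simp only [Real.norm_eq_abs] at hlip
  linarith [neg_le_of_abs_le hlip]

lemma half_lt_of_forall_nonneg_deriv_neg {p p' : ℝ → ℝ} (hp : ∀ x, HasDerivAt p (p' x) x)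
    (hneg : ∀ x, 0 ≤ p x → p' x < 0) {x y : ℝ} (hx : 0 < p x) (hyx : y ≤ x) :
    p x / 2 < p y := by
  by_contra! hy
  have hcont : Continuous p := continuous_iff_continuousAt.2 fun t => (hp t).continuousAt
  have := image_le_of_deriv_right_lt_deriv_boundary hcont.continuousOn
    (fun t _ => (hp t).hasDerivWithinAt) hy (fun t => hasDerivAt_const t (p x / 2))
    (fun t _ ht => hneg t (by linarith)) (Set.right_mem_Icc.2 hyx)
  linarith

lemma exists_nonpos_of_forall_le_deriv {u u' : ℝ → ℝ} {δ x : ℝ} (hδ : 0 < δ)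
    (hu : ∀ t, HasDerivAt u (u' t) t) (hu' : ∀ t ≤ x, δ ≤ u' t) : ∃ y, u y ≤ 0 := by
  have hcont : Continuous u := continuous_iff_continuousAt.2 fun t => (hu t).continuousAt
  set y := x - |u x| / δ with hy
  have hyx : y ≤ x := sub_le_self x (by positivity)
  have hdrop : δ * (x - y) ≤ u x - u y :=
    (convex_Iic x).mul_sub_le_image_sub_of_le_deriv hcont.continuousOn
      (fun t _ => (hu t).differentiableAt.differentiableWithinAt)
      (fun t ht => (hu t).deriv ▸ hu' t (interior_subset (s := Set.Iic x) ht))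
      y hyx x Set.self_mem_Iic hyx
  rw [hy, sub_sub_cancel, mul_div_cancel₀ _ hδ.ne'] at hdrop
  exact ⟨y, by linarith [le_abs_self (u x)]⟩

/- Rescaling a fixed bump `η` to `η (x / S)` divides `∫ (η')²` by `S`. -/
lemma exists_cutoff_integral_deriv_sq_le (R : ℝ) {ε : ℝ} (hε : 0 < ε) :
    ∃ χ : ℝ → ℝ, ContDiff ℝ 1 χ ∧ HasCompactSupport χ ∧ (∀ x, χ x ^ 2 ≤ 1) ∧
      (∀ x, |x| ≤ R → χ x = 1) ∧ ∫ x, deriv χ x ^ 2 ≤ ε := by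
  obtain ⟨η, hη⟩ : ∃ η : ContDiffBump (0 : ℝ), η.rIn = 1 :=
    ⟨⟨1, 2, one_pos, one_lt_two⟩, rfl⟩
  set I := ∫ x, deriv η x ^ 2
  obtain ⟨S, hRS, hIS, hS0⟩ : ∃ S, R ≤ S ∧ I / ε ≤ S ∧ 0 < S :=
    ((eventually_ge_atTop R).and ((eventually_ge_atTop (I / ε)).and (eventually_gt_atTop 0))).exists
  have hsupp : HasCompactSupport fun x => η (S⁻¹ * x) := by
    simpa only [smul_eq_mul] using η.hasCompactSupport.comp_smul (inv_ne_zero hS0.ne')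
  have hderiv x : deriv (fun y => η (S⁻¹ * y)) x = S⁻¹ * deriv η (S⁻¹ * x) :=
    deriv_comp_mul_left S⁻¹ η x
  refine ⟨fun x => η (S⁻¹ * x), η.contDiff.comp (contDiff_const.mul contDiff_id),
    hsupp, fun x => pow_le_one₀ η.nonneg η.le_one, fun x hx => ?_, ?_⟩
  · refine η.one_of_mem_closedBall ?_
    rw [mem_closedBall_zero_iff, Real.norm_eq_abs, abs_mul, abs_of_pos (inv_pos.2 hS0), hη]
    exact inv_mul_le_one_of_le₀ (hx.trans hRS) hS0.le
  · calc ∫ x, deriv (fun y => η (S⁻¹ * y)) x ^ 2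
        = S⁻¹ ^ 2 * ∫ x, deriv η (S⁻¹ * x) ^ 2 := by
          simp only [hderiv, mul_pow, integral_const_mul]
      _ = S⁻¹ ^ 2 * (S * I) := by
          rw [Measure.integral_comp_mul_left (fun x => deriv η x ^ 2), inv_inv, abs_of_pos hS0,
            smul_eq_mul]
      _ = I / S := by field_simp
      _ ≤ ε := (div_le_comm₀ hε hS0).1 hIS

end RealAnalysis

section Energy

variable {a r : ℝ → ℝ} {β ρ : ℝ}

lemma hasCompactSupport_sq {φ : ℝ → ℝ} (hφ : HasCompactSupport φ) :
    HasCompactSupport fun x => φ x ^ 2 :=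
  hφ.comp_left (g := fun t : ℝ => t ^ 2) (zero_pow two_ne_zero)

lemma integral_rayleigh_le (hac : Continuous a) (hrc : Continuous r) (ha : ∀ x, 0 ≤ a x)
    (hr : ∀ x, r x ≤ ρ) {φ : ℝ → ℝ} (hφ : ContDiff ℝ 1 φ) (hφs : HasCompactSupport φ) :
    ∫ x, (r x * φ x ^ 2 - a x * deriv φ x ^ 2) ≤ ρ * ∫ x, φ x ^ 2 := by
  have hφ' : Continuous (deriv φ) := hφ.continuous_deriv le_rfl
  have hsq := hasCompactSupport_sq hφs
  rw [← integral_const_mul]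
  refine integral_mono ?_ ?_ fun x => ?_
  · exact ((hrc.mul (hφ.continuous.pow 2)).integrable_of_hasCompactSupport hsq.mul_left).sub
      ((hac.mul (hφ'.pow 2)).integrable_of_hasCompactSupport
        (hasCompactSupport_sq hφs.deriv).mul_left)
  · exact ((hφ.continuous.pow 2).integrable_of_hasCompactSupport hsq).const_mul ρ
  · have := mul_le_mul_of_nonneg_right (hr x) (sq_nonneg (φ x))
    have := mul_nonneg (ha x) (sq_nonneg (deriv φ x))
    dsimp only
    linarith

lemma integral_rayleigh_le_gammaBar_mul (hac : Continuous a) (hrc : Continuous r)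
    (ha : ∀ x, 0 ≤ a x) (hr : ∀ x, r x ≤ ρ) {φ : ℝ → ℝ} (hφ : ContDiff ℝ 1 φ)
    (hφs : HasCompactSupport φ) :
    ∫ x, (r x * φ x ^ 2 - a x * deriv φ x ^ 2) ≤ gammaBar a r * ∫ x, φ x ^ 2 := by
  have hmass {ψ : ℝ → ℝ} (hψ : ContDiff ℝ 1 ψ) (hψs : HasCompactSupport ψ) (hψ0 : ψ ≠ 0) :
      0 < ∫ x, ψ x ^ 2 := by
    obtain ⟨x, hx⟩ := Function.ne_iff.1 hψ0
    exact (hψ.continuous.pow 2).integral_pos_of_hasCompactSupport_nonneg_nonzero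
      (hasCompactSupport_sq hψs) (fun x => sq_nonneg _) (pow_ne_zero 2 hx)
  rcases eq_or_ne φ 0 with rfl | hφ0
  · simp [Pi.zero_def]
  rw [← div_le_iff₀ (hmass hφ hφs hφ0)]
  refine le_csSup ⟨ρ, ?_⟩ ⟨φ, hφ, hφs, hφ0, rfl⟩
  rintro _ ⟨ψ, hψ, hψs, hψ0, rfl⟩
  exact (div_le_iff₀ (hmass hψ hψs hψ0)).2 (integral_rayleigh_le hac hrc ha hr hψ hψs)

variable {z z' : ℝ → ℝ}

/- Integrates `a ((χ z)')² = a (χ' z)² - χ² z (a z')' + (χ² z a z')'`. -/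
lemma integral_mul_deriv_cutoff_mul_sq_eq {g χ : ℝ → ℝ} (hac : Continuous a) (hg : Continuous g)
    (hz'c : Continuous z') (hz : ∀ x, HasDerivAt z (z' x) x)
    (hflux : ∀ x, HasDerivAt (fun y => a y * z' y) (g x) x)
    (hχ : ContDiff ℝ 1 χ) (hχs : HasCompactSupport χ) :
    ∫ x, a x * deriv (fun y => χ y * z y) x ^ 2 =
      (∫ x, a x * (deriv χ x * z x) ^ 2) - ∫ x, χ x ^ 2 * (z x * g x) := by
  have hzc : Continuous z := continuous_iff_continuousAt.2 fun x => (hz x).continuousAt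
  have : Continuous (deriv χ) := hχ.continuous_deriv le_rfl
  have hχc := hχ.continuous
  have hχd x : HasDerivAt χ (deriv χ x) x := (hχ.differentiable one_ne_zero x).hasDerivAt
  have hderiv : deriv (fun y => χ y * z y) = fun x => deriv χ x * z x + χ x * z' x :=
    funext fun x => ((hχd x).mul (hz x)).deriv
  have hχsq := hasCompactSupport_sq hχs
  have hcut : Integrable fun x => a x * (deriv χ x * z x) ^ 2 :=
    Continuous.integrable_of_hasCompactSupport (by fun_prop)
      (hasCompactSupport_sq hχs.deriv.mul_right).mul_left
  have hsource : Integrable fun x => χ x ^ 2 * (z x * g x) :=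
    Continuous.integrable_of_hasCompactSupport (by fun_prop) hχsq.mul_right
  have henergy : Integrable fun x => a x * (deriv χ x * z x + χ x * z' x) ^ 2 :=
    Continuous.integrable_of_hasCompactSupport (by fun_prop)
      (hasCompactSupport_sq (hχs.deriv.mul_right.add hχs.mul_right)).mul_left
  have hdiv x : HasDerivAt (fun y => χ y ^ 2 * (z y * (a y * z' y)))
      (a x * (deriv χ x * z x + χ x * z' x) ^ 2 - a x * (deriv χ x * z x) ^ 2
        + χ x ^ 2 * (z x * g x)) x := by
    refine (((hχd x).fun_pow 2).fun_mul ((hz x).fun_mul (hflux x))).congr_deriv ?_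
    push_cast
    ring
  have hdiff : Integrable fun x =>
      a x * (deriv χ x * z x + χ x * z' x) ^ 2 - a x * (deriv χ x * z x) ^ 2 := henergy.sub hcut
  have hzero := integral_eq_zero_of_hasDerivAt_of_integrable hdiv (hdiff.add hsource)
    (Continuous.integrable_of_hasCompactSupport (by fun_prop) hχsq.mul_right)
  rw [integral_add hdiff hsource, integral_sub henergy hcut] at hzero
  rw [hderiv]
  linarith

variable {f : ℝ → ℝ} {γ : ℝ}

lemma gap_mul_integral_cutoff_mul_sq_le {χ : ℝ → ℝ} (hac : Continuous a) (hrc : Continuous r)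
    (ha : ∀ x, 0 ≤ a x) (hr : ∀ x, r x ≤ ρ) (hfc : Continuous f) (hz'c : Continuous z')
    (hz : ∀ x, HasDerivAt z (z' x) x)
    (hflux : ∀ x, HasDerivAt (fun y => a y * z' y) ((γ - r x) * z x - f x) x)
    (hχ : ContDiff ℝ 1 χ) (hχs : HasCompactSupport χ) :
    (γ - gammaBar a r) * ∫ x, (χ x * z x) ^ 2 ≤
      (∫ x, χ x ^ 2 * (z x * f x)) + ∫ x, a x * (deriv χ x * z x) ^ 2 := by
  have hzC : ContDiff ℝ 1 z := contDiff_one_iff_deriv.2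
    ⟨fun x => (hz x).differentiableAt, by rwa [funext fun x => (hz x).deriv]⟩
  have hψ : ContDiff ℝ 1 fun x => χ x * z x := hχ.mul hzC
  have hψs : HasCompactSupport fun x => χ x * z x := hχs.mul_right
  have hzc := hzC.continuous
  have hχc := hχ.continuous
  have : Continuous (deriv fun x => χ x * z x) := hψ.continuous_deriv le_rfl
  have hψsq := hasCompactSupport_sq hψs
  have hmass : Integrable fun x => (χ x * z x) ^ 2 :=
    Continuous.integrable_of_hasCompactSupport (by fun_prop) hψsq
  have hpot : Integrable fun x => r x * (χ x * z x) ^ 2 :=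
    Continuous.integrable_of_hasCompactSupport (by fun_prop) hψsq.mul_left
  have hkin : Integrable fun x => a x * deriv (fun y => χ y * z y) x ^ 2 :=
    Continuous.integrable_of_hasCompactSupport (by fun_prop)
      (hasCompactSupport_sq hψs.deriv).mul_left
  have hsource : Integrable fun x => χ x ^ 2 * (z x * f x) :=
    Continuous.integrable_of_hasCompactSupport (by fun_prop) (hasCompactSupport_sq hχs).mul_right
  have hsplit : ∫ x, χ x ^ 2 * (z x * ((γ - r x) * z x - f x)) =
      γ * (∫ x, (χ x * z x) ^ 2) - (∫ x, r x * (χ x * z x) ^ 2) - ∫ x, χ x ^ 2 * (z x * f x) := by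
    have hdiff : Integrable fun x => γ * (χ x * z x) ^ 2 - r x * (χ x * z x) ^ 2 :=
      (hmass.const_mul γ).sub hpot
    rw [← integral_const_mul, ← integral_sub (hmass.const_mul γ) hpot,
      ← integral_sub hdiff hsource]
    congr with x
    ring
  have hray := integral_rayleigh_le_gammaBar_mul hac hrc ha hr hψ hψs
  rw [integral_sub hpot hkin, integral_mul_deriv_cutoff_mul_sq_eq hac (by fun_prop) hz'c hz hflux hχ
    hχs, hsplit] at hray
  linarith

lemma integral_mul_deriv_cutoff_mul_sq_le {χ : ℝ → ℝ} {Z : ℝ} (hac : Continuous a)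
    (ha : ∀ x, 0 ≤ a x) (haβ : ∀ x, a x ≤ β) (hzc : Continuous z) (hZ : ∀ x, |z x| ≤ Z)
    (hχ : ContDiff ℝ 1 χ) (hχs : HasCompactSupport χ) :
    ∫ x, a x * (deriv χ x * z x) ^ 2 ≤ β * Z ^ 2 * ∫ x, deriv χ x ^ 2 := by
  have hβ : 0 ≤ β := (ha 0).trans (haβ 0)
  have hχ' : Continuous (deriv χ) := hχ.continuous_deriv le_rfl
  rw [← integral_const_mul]
  refine integral_mono (Continuous.integrable_of_hasCompactSupport (by fun_prop)
    (hasCompactSupport_sq hχs.deriv.mul_right).mul_left)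
    (((hχ'.pow 2).integrable_of_hasCompactSupport (hasCompactSupport_sq hχs.deriv)).const_mul _)
    fun x => ?_
  calc a x * (deriv χ x * z x) ^ 2 = a x * |z x| ^ 2 * deriv χ x ^ 2 := by rw [sq_abs]; ring
    _ ≤ β * Z ^ 2 * deriv χ x ^ 2 := by gcongr <;> apply_rules

lemma gap_mul_setIntegral_sq_le {Z : ℝ} (hac : Continuous a) (hrc : Continuous r)
    (ha : ∀ x, 0 ≤ a x) (haβ : ∀ x, a x ≤ β) (hr : ∀ x, r x ≤ ρ) (hγ : gammaBar a r ≤ γ)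
    (hfc : Continuous f) (hz'c : Continuous z') (hz : ∀ x, HasDerivAt z (z' x) x)
    (hflux : ∀ x, HasDerivAt (fun y => a y * z' y) ((γ - r x) * z x - f x) x)
    (hZ : ∀ x, |z x| ≤ Z) (hzf : ∀ x, 0 ≤ z x * f x) (hint : Integrable fun x => z x * f x)
    (b c : ℝ) :
    (γ - gammaBar a r) * ∫ x in Set.Icc b c, z x ^ 2 ≤ ∫ x, z x * f x := by
  have hzc : Continuous z := continuous_iff_continuousAt.2 fun x => (hz x).continuousAt
  refine le_of_forall_pos_le_add fun δ hδ => ?_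
  have hN : 0 < β * Z ^ 2 + 1 :=
    add_pos_of_nonneg_of_pos (mul_nonneg ((ha 0).trans (haβ 0)) (sq_nonneg Z)) one_pos
  obtain ⟨χ, hχ, hχs, hχ1, hχone, hχ'⟩ :=
    exists_cutoff_integral_deriv_sq_le (max |b| |c|) (div_pos hδ hN)
  have hχc := hχ.continuous
  have hmass : ∫ x in Set.Icc b c, z x ^ 2 ≤ ∫ x, (χ x * z x) ^ 2 := by
    have heq : ∫ x in Set.Icc b c, z x ^ 2 = ∫ x in Set.Icc b c, (χ x * z x) ^ 2 :=
      setIntegral_congr_fun measurableSet_Icc fun x hx => by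
        simp only [hχone x (abs_le_max_abs_abs hx.1 hx.2), one_mul]
    rw [heq]
    exact setIntegral_le_integral (Continuous.integrable_of_hasCompactSupport (by fun_prop)
      (hasCompactSupport_sq hχs.mul_right)) (Eventually.of_forall fun x => sq_nonneg (χ x * z x))
  have hsource : ∫ x, χ x ^ 2 * (z x * f x) ≤ ∫ x, z x * f x :=
    integral_mono (Continuous.integrable_of_hasCompactSupport (by fun_prop)
      (hasCompactSupport_sq hχs).mul_right) hint
      fun x => mul_le_of_le_one_left (hzf x) (hχ1 x)
  have hsmall : β * Z ^ 2 * ∫ x, deriv χ x ^ 2 ≤ δ := by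
    calc β * Z ^ 2 * ∫ x, deriv χ x ^ 2 ≤ (β * Z ^ 2 + 1) * (δ / (β * Z ^ 2 + 1)) :=
          mul_le_mul (by linarith) hχ' (integral_nonneg fun x => sq_nonneg (deriv χ x)) hN.le
      _ = δ := mul_div_cancel₀ δ hN.ne'
  calc (γ - gammaBar a r) * ∫ x in Set.Icc b c, z x ^ 2
      ≤ (γ - gammaBar a r) * ∫ x, (χ x * z x) ^ 2 :=
        mul_le_mul_of_nonneg_left hmass (sub_nonneg.2 hγ)
    _ ≤ (∫ x, χ x ^ 2 * (z x * f x)) + ∫ x, a x * (deriv χ x * z x) ^ 2 :=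
        gap_mul_integral_cutoff_mul_sq_le hac hrc ha hr hfc hz'c hz hflux hχ hχs
    _ ≤ (∫ x, z x * f x) + δ :=
        add_le_add hsource ((integral_mul_deriv_cutoff_mul_sq_le hac ha haβ hzc hZ hχ hχs).trans
          hsmall)

lemma gap_mul_sq_le {Z m x₀ : ℝ} (hac : Continuous a) (hrc : Continuous r) (ha : ∀ x, 0 ≤ a x)
    (haβ : ∀ x, a x ≤ β) (hr : ∀ x, r x ≤ ρ) (hγ : gammaBar a r ≤ γ)
    (hfc : Continuous f) (hz'c : Continuous z') (hz : ∀ x, HasDerivAt z (z' x) x)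
    (hflux : ∀ x, HasDerivAt (fun y => a y * z' y) ((γ - r x) * z x - f x) x)
    (hZ : ∀ x, |z x| ≤ Z) (hzf : ∀ x, 0 ≤ z x * f x) (hint : Integrable fun x => z x * f x)
    (hm : 0 ≤ m) (hmz : ∀ x, |x - x₀| ≤ 1 → m ≤ z x) :
    (γ - gammaBar a r) * (2 * m ^ 2) ≤ ∫ x, z x * f x := by
  have hzc : Continuous z := continuous_iff_continuousAt.2 fun x => (hz x).continuousAt
  have hmass : 2 * m ^ 2 ≤ ∫ x in Set.Icc (x₀ - 1) (x₀ + 1), z x ^ 2 :=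
    calc 2 * m ^ 2 = ∫ _ in Set.Icc (x₀ - 1) (x₀ + 1), m ^ 2 := by
          rw [setIntegral_const, Real.volume_real_Icc_of_le (by linarith), smul_eq_mul]
          ring
      _ ≤ ∫ x in Set.Icc (x₀ - 1) (x₀ + 1), z x ^ 2 :=
          setIntegral_mono_on continuous_const.continuousOn.integrableOn_Icc
            (hzc.pow 2).continuousOn.integrableOn_Icc measurableSet_Icc fun x hx =>
            pow_le_pow_left₀ hm (hmz x (abs_le.2 ⟨by linarith [hx.1], by linarith [hx.2]⟩)) 2
  exact (mul_le_mul_of_nonneg_left hmass (sub_nonneg.2 hγ)).trans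
    (gap_mul_setIntegral_sq_le hac hrc ha haβ hr hγ hfc hz'c hz hflux hZ hzf hint _ _)

end Energy

section PositiveSolution

/-- `u` is a positive solution of `(a u')' = q u` on `ℝ`, with derivative `u'`. Carrying `u'` as an
argument lets the equation be read as the differentiability of the flux `a u'`, where `a` itself
need not be differentiable. -/
structure IsPositiveSolution (a q u u' : ℝ → ℝ) : Prop where
  pos : ∀ x, 0 < u x
  hasDerivAt : ∀ x, HasDerivAt u (u' x) x
  hasDerivAt_flux : ∀ x, HasDerivAt (fun y => a y * u' y) (q x * u x) x

lemma IsGenPrincEig.isPositiveSolution {a r φ φ' : ℝ → ℝ} {γ : ℝ} {l : Filter ℝ}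
    (hφ : IsGenPrincEig a r γ l φ φ') : IsPositiveSolution a (fun x => γ - r x) φ φ' :=
  ⟨hφ.1, hφ.2.2.1, hφ.2.2.2.1⟩

lemma IsGenPrincEig.isBoundedUnder_le {a r φ φ' : ℝ → ℝ} {γ : ℝ} {l : Filter ℝ}
    (hφ : IsGenPrincEig a r γ l φ φ') : IsBoundedUnder (· ≤ ·) l φ :=
  hφ.2.2.2.2.isBoundedUnder_le

lemma continuous_of_hasDerivAt_mul {a w g : ℝ → ℝ} (hac : Continuous a) (ha : ∀ x, a x ≠ 0)
    (hw : ∀ x, HasDerivAt (fun y => a y * w y) (g x) x) : Continuous w := by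
  have hflux : Continuous fun y => a y * w y :=
    continuous_iff_continuousAt.2 fun x => (hw x).continuousAt
  exact (hflux.div hac ha).congr fun x => mul_div_cancel_left₀ (w x) (ha x)

namespace IsPositiveSolution

variable {a q u u' v v' : ℝ → ℝ} {α β K M : ℝ}

lemma continuous (hu : IsPositiveSolution a q u u') : Continuous u :=
  continuous_iff_continuousAt.2 fun x => (hu.hasDerivAt x).continuousAt

lemma continuous_deriv (hu : IsPositiveSolution a q u u') (hac : Continuous a)
    (ha : ∀ x, a x ≠ 0) : Continuous u' :=
  continuous_of_hasDerivAt_mul hac ha hu.hasDerivAt_flux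

lemma const_mul (hu : IsPositiveSolution a q u u') {c : ℝ} (hc : 0 < c) :
    IsPositiveSolution a q (fun x => c * u x) (fun x => c * u' x) where
  pos x := mul_pos hc (hu.pos x)
  hasDerivAt x := (hu.hasDerivAt x).const_mul c
  hasDerivAt_flux x := by
    simpa only [mul_left_comm c] using (hu.hasDerivAt_flux x).const_mul c

lemma comp_neg (hu : IsPositiveSolution a q u u') :
    IsPositiveSolution (fun x => a (-x)) (fun x => q (-x)) (fun x => u (-x))
      (fun x => -u' (-x)) where
  pos x := hu.pos (-x)
  hasDerivAt x := by
    simpa only [mul_neg_one, Function.comp_def] using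
      (hu.hasDerivAt (-x)).comp x (hasDerivAt_neg x)
  hasDerivAt_flux x := by
    simpa only [mul_one, neg_neg, mul_neg, Function.comp_def] using
      ((hu.hasDerivAt_flux (-x)).comp x (hasDerivAt_neg x)).fun_neg

/- Where `p = a u' - K u` is nonnegative it is decreasing, so `p x > 0` keeps `u'` bounded below by
a positive constant on the left of `x`, which forces `u` to become negative there. -/
lemma flux_le (hu : IsPositiveSolution a q u u') (ha : ∀ x, 0 < a x) (haβ : ∀ x, a x ≤ β)
    (hq : ∀ x, q x ≤ M) (hK : 0 ≤ K) (hMK : M * β < K ^ 2) (x : ℝ) :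
    a x * u' x ≤ K * u x := by
  by_contra! hx
  have hβ : 0 < β := (ha 0).trans_le (haβ 0)
  have haderiv_le {t : ℝ} (ht : 0 ≤ a t * u' t) : a t * u' t ≤ β * u' t :=
    mul_le_mul_of_nonneg_right (haβ t) (nonneg_of_mul_nonneg_right ht (ha t))
  set p : ℝ → ℝ := fun t => a t * u' t - K * u t
  have hpd t : HasDerivAt p (q t * u t - K * u' t) t :=
    (hu.hasDerivAt_flux t).sub ((hu.hasDerivAt t).const_mul K)
  have hpneg t (ht : 0 ≤ p t) : q t * u t - K * u' t < 0 := by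
    have hut := hu.pos t
    have hKu : K * u t ≤ β * u' t :=
      (sub_nonneg.1 ht).trans (haderiv_le ((mul_nonneg hK hut.le).trans (sub_nonneg.1 ht)))
    have hqM : q t * u t ≤ M * u t := mul_le_mul_of_nonneg_right (hq t) hut.le
    nlinarith [mul_le_mul_of_nonneg_left hKu hK, mul_lt_mul_of_pos_right hMK hut,
      mul_le_mul_of_nonneg_left hqM hβ.le]
  have hpx : 0 < p x := sub_pos.2 hx
  set δ := p x / 2 / β
  have hδ : 0 < δ := by positivity
  have hu' t (ht : t ≤ x) : δ ≤ u' t := by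
    have hpt : p x / 2 < p t := half_lt_of_forall_nonneg_deriv_neg hpd hpneg hpx ht
    have hflux : p x / 2 ≤ a t * u' t := by linarith [mul_nonneg hK (hu.pos t).le]
    exact (div_le_iff₀' hβ).2 (hflux.trans (haderiv_le (by linarith)))
  obtain ⟨y, hy⟩ := exists_nonpos_of_forall_le_deriv hδ hu.hasDerivAt hu'
  exact hy.not_gt (hu.pos y)

lemma abs_flux_le (hu : IsPositiveSolution a q u u') (ha : ∀ x, 0 < a x) (haβ : ∀ x, a x ≤ β)
    (hq : ∀ x, q x ≤ M) (hK : 0 ≤ K) (hMK : M * β < K ^ 2) (x : ℝ) :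
    |a x * u' x| ≤ K * u x := by
  have hneg := hu.comp_neg.flux_le (fun x => ha (-x)) (fun x => haβ (-x)) (fun x => hq (-x))
    hK hMK (-x)
  rw [neg_neg, mul_neg] at hneg
  exact abs_le'.2 ⟨hu.flux_le ha haβ hq hK hMK x, hneg⟩

lemma abs_deriv_le (hu : IsPositiveSolution a q u u') (hα : 0 < α) (ha : ∀ x, α ≤ a x)
    (haβ : ∀ x, a x ≤ β) (hq : ∀ x, q x ≤ M) (hK : 0 ≤ K) (hMK : M * β < K ^ 2) (x : ℝ) :
    |u' x| ≤ K / α * u x := by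
  have hflux := hu.abs_flux_le (fun x => hα.trans_le (ha x)) haβ hq hK hMK x
  rw [abs_mul, abs_of_pos (hα.trans_le (ha x))] at hflux
  rw [div_mul_eq_mul_div, le_div_iff₀' hα]
  exact (mul_le_mul_of_nonneg_right (ha x) (abs_nonneg _)).trans hflux

lemma not_bddAbove_range {r : ℝ → ℝ} {ρ γ : ℝ}
    (hu : IsPositiveSolution a (fun x => γ - r x) u u') (hac : Continuous a) (hrc : Continuous r)
    (ha : ∀ x, 0 < a x) (haβ : ∀ x, a x ≤ β) (hr : ∀ x, r x ≤ ρ) (hγ : gammaBar a r < γ) :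
    ¬ BddAbove (Set.range u) := by
  rintro ⟨Z, hZ⟩
  obtain ⟨y, -, hy⟩ := (isCompact_closedBall (0 : ℝ) 1).exists_isMinOn
    (Metric.nonempty_closedBall.2 zero_le_one) hu.continuous.continuousOn
  have hmass := gap_mul_sq_le (f := fun _ => 0) (x₀ := 0) hac hrc (fun x => (ha x).le) haβ hr hγ.le
    continuous_const (hu.continuous_deriv hac fun x => (ha x).ne') hu.hasDerivAt
    (fun x => by simpa only [sub_zero] using hu.hasDerivAt_flux x)
    (fun x => (abs_of_pos (hu.pos x)).trans_le (hZ ⟨x, rfl⟩)) (by simp) (by simp)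
    (hu.pos y).le fun x hx => hy (Metric.mem_closedBall.2 hx)
  have := mul_pos (sub_pos.2 hγ) (mul_pos two_pos (pow_pos (hu.pos y) 2))
  simp only [mul_zero, integral_zero] at hmass
  linarith

end IsPositiveSolution

end PositiveSolution

section Wronskian

variable {a q u u' v v' : ℝ → ℝ}

/-- The Wronskian `a (u v' - v u')` of two solutions of `(a w')' = q w`. -/
def wronskian (a u u' v v' : ℝ → ℝ) (x : ℝ) : ℝ :=
  a x * (u x * v' x - v x * u' x)

lemma wronskian_const_mul (c x : ℝ) :
    wronskian a u u' (fun y => c * v y) (fun y => c * v' y) x = c * wronskian a u u' v v' x := by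
  simp only [wronskian]
  ring

lemma wronskian_eq (hu : IsPositiveSolution a q u u') (hv : IsPositiveSolution a q v v')
    (x y : ℝ) : wronskian a u u' v v' x = wronskian a u u' v v' y := by
  have hderiv t : HasDerivAt (wronskian a u u' v v') 0 t := by
    have h := ((hu.hasDerivAt t).fun_mul (hv.hasDerivAt_flux t)).fun_sub
      ((hv.hasDerivAt t).fun_mul (hu.hasDerivAt_flux t))
    refine (h.congr_deriv (by ring)).congr_of_eventuallyEq (.of_forall fun s => ?_)
    simp only [wronskian]
    ring
  exact is_const_of_deriv_eq_zero (fun t => (hderiv t).differentiableAt)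
    (fun t => (hderiv t).deriv) x y

lemma wronskian_le {β K M : ℝ} (hu : IsPositiveSolution a q u u')
    (hv : IsPositiveSolution a q v v') (ha : ∀ x, 0 < a x) (haβ : ∀ x, a x ≤ β)
    (hq : ∀ x, q x ≤ M) (hK : 0 ≤ K) (hMK : M * β < K ^ 2) (x : ℝ) :
    wronskian a u u' v v' x ≤ 2 * K * (u x * v x) := by
  have hv' : u x * (a x * v' x) ≤ u x * (K * v x) :=
    mul_le_mul_of_nonneg_left (hv.flux_le ha haβ hq hK hMK x) (hu.pos x).le
  have hu' : v x * -(a x * u' x) ≤ v x * (K * u x) :=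
    mul_le_mul_of_nonneg_left (neg_le.1 (neg_le_of_abs_le (hu.abs_flux_le ha haβ hq hK hMK x)))
      (hv.pos x).le
  simp only [wronskian]
  linarith

lemma wronskian_pos {r : ℝ → ℝ} {β ρ γ : ℝ} (hac : Continuous a) (hrc : Continuous r)
    (ha : ∀ x, 0 < a x) (haβ : ∀ x, a x ≤ β) (hr : ∀ x, r x ≤ ρ) (hγ : gammaBar a r < γ)
    (hu : IsPositiveSolution a (fun x => γ - r x) u u')
    (hv : IsPositiveSolution a (fun x => γ - r x) v v')
    (hutop : IsBoundedUnder (· ≤ ·) atTop u) (hvbot : IsBoundedUnder (· ≤ ·) atBot v) (x : ℝ) :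
    0 < wronskian a u u' v v' x := by
  by_contra! hW
  have hquot t : HasDerivAt (fun s => v s / u s) ((v' t * u t - v t * u' t) / u t ^ 2) t :=
    (hv.hasDerivAt t).fun_div (hu.hasDerivAt t) (hu.pos t).ne'
  have hanti : Antitone fun s => v s / u s := antitone_of_hasDerivAt_nonpos hquot fun t => by
    have hWt : a t * (u t * v' t - v t * u' t) ≤ 0 := (wronskian_eq hu hv t x).trans_le hW
    rw [mul_comm (v' t)]
    exact div_nonpos_of_nonpos_of_nonneg (nonpos_of_mul_nonpos_right hWt (ha t)) (sq_nonneg _)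
  have hle : ∀ᶠ t in atTop, v t ≤ v 0 / u 0 * u t := by
    filter_upwards [eventually_ge_atTop 0] with t ht
    exact (div_le_iff₀ (hu.pos t)).1 (hanti ht)
  have hvtop : IsBoundedUnder (· ≤ ·) atTop v :=
    ((monotone_mul_left_of_nonneg (div_pos (hv.pos 0) (hu.pos 0)).le).isBoundedUnder_le_comp
      hutop).mono_le hle
  exact hv.not_bddAbove_range hac hrc ha haβ hr hγ
    (bddAbove_range_of_isBoundedUnder hv.continuous hvtop hvbot)

end Wronskian

section ParallelSum

variable {a q u u' v v' : ℝ → ℝ} {W : ℝ}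

/-- The parallel sum `(u⁻¹ + v⁻¹)⁻¹`, a smooth substitute for `min u v`. -/
noncomputable def parallelSum (u v : ℝ → ℝ) (x : ℝ) : ℝ :=
  u x * v x / (u x + v x)

/-- The function `f` such that `z = parallelSum u v` satisfies `(a z')' = q z - f` when `u` and `v`
satisfy `(a w')' = q w`. -/
noncomputable def parallelSumSource (a u u' v v' : ℝ → ℝ) (x : ℝ) : ℝ :=
  2 * wronskian a u u' v v' x ^ 2 / (a x * (u x + v x) ^ 3)

lemma parallelSum_le_left {x : ℝ} (hu : 0 < u x) (hv : 0 < v x) : parallelSum u v x ≤ u x :=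
  (div_le_iff₀ (add_pos hu hv)).2 (by nlinarith)

lemma parallelSum_le_right {x : ℝ} (hu : 0 < u x) (hv : 0 < v x) : parallelSum u v x ≤ v x :=
  (div_le_iff₀ (add_pos hu hv)).2 (by nlinarith)

lemma half_le_parallelSum {x m : ℝ} (hm : 0 < m) (hu : m ≤ u x) (hv : m ≤ v x) :
    m / 2 ≤ parallelSum u v x :=
  (le_div_iff₀ (by linarith)).2 (by nlinarith)

lemma hasDerivAt_parallelSum (hu : IsPositiveSolution a q u u') (hv : IsPositiveSolution a q v v')
    (x : ℝ) :
    HasDerivAt (parallelSum u v) ((u' x * v x ^ 2 + u x ^ 2 * v' x) / (u x + v x) ^ 2) x := by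
  refine (((hu.hasDerivAt x).fun_mul (hv.hasDerivAt x)).fun_div
    ((hu.hasDerivAt x).fun_add (hv.hasDerivAt x))
    (add_pos (hu.pos x) (hv.pos x)).ne').congr_deriv ?_
  ring

lemma hasDerivAt_flux_parallelSum (hu : IsPositiveSolution a q u u')
    (hv : IsPositiveSolution a q v v') (ha : ∀ x, a x ≠ 0) (x : ℝ) :
    HasDerivAt (fun y => a y * ((u' y * v y ^ 2 + u y ^ 2 * v' y) / (u y + v y) ^ 2))
      (q x * parallelSum u v x - parallelSumSource a u u' v v' x) x := by
  have hsum y : u y + v y ≠ 0 := (add_pos (hu.pos y) (hv.pos y)).ne'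
  have h := (((hu.hasDerivAt_flux x).fun_mul ((hv.hasDerivAt x).fun_pow 2)).fun_add
    (((hu.hasDerivAt x).fun_pow 2).fun_mul (hv.hasDerivAt_flux x))).fun_div
    (((hu.hasDerivAt x).fun_add (hv.hasDerivAt x)).fun_pow 2) (pow_ne_zero 2 (hsum x))
  refine (h.congr_deriv ?_).congr_of_eventuallyEq (.of_forall fun y => by ring)
  have := hsum x
  have := ha x
  simp only [parallelSum, parallelSumSource, wronskian]
  field_simp
  ring

/- With `s = u / (u + v)` and `W` the Wronskian, `s' = -W / (a (u + v)²)`, so the product of the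
parallel sum and its source is `-2 W s (1 - s) s'`. -/
lemma hasDerivAt_parallelSum_mul_source_primitive (hu : IsPositiveSolution a q u u')
    (hv : IsPositiveSolution a q v v') (ha : ∀ x, a x ≠ 0)
    (hW : ∀ x, wronskian a u u' v v' x = W) (x : ℝ) :
    HasDerivAt (fun y => -(W / 3) * (3 * (u y / (u y + v y)) ^ 2 - 2 * (u y / (u y + v y)) ^ 3))
      (parallelSum u v x * parallelSumSource a u u' v v' x) x := by
  have hsum : u x + v x ≠ 0 := (add_pos (hu.pos x) (hv.pos x)).ne'
  have := ha x
  have hs : HasDerivAt (fun y => u y / (u y + v y)) (-W / (a x * (u x + v x) ^ 2)) x := by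
    refine ((hu.hasDerivAt x).fun_div ((hu.hasDerivAt x).fun_add (hv.hasDerivAt x))
      hsum).congr_deriv ?_
    rw [← hW x, wronskian]
    field_simp
    ring
  refine ((((hs.fun_pow 2).const_mul 3).fun_sub ((hs.fun_pow 3).const_mul 2)).const_mul
    (-(W / 3))).congr_deriv ?_
  simp only [parallelSum, parallelSumSource, hW x]
  push_cast
  field_simp
  ring

lemma parallelSum_mul_source_nonneg (hu : IsPositiveSolution a q u u')
    (hv : IsPositiveSolution a q v v') (ha : ∀ x, 0 < a x) (x : ℝ) :
    0 ≤ parallelSum u v x * parallelSumSource a u u' v v' x := by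
  have := hu.pos x
  have := hv.pos x
  have := ha x
  unfold parallelSum parallelSumSource
  positivity

lemma integral_parallelSum_mul_source_le (hu : IsPositiveSolution a q u u')
    (hv : IsPositiveSolution a q v v') (ha : ∀ x, 0 < a x)
    (hW : ∀ x, wronskian a u u' v v' x = W) (hW0 : 0 ≤ W) :
    Integrable (fun x => parallelSum u v x * parallelSumSource a u u' v v' x) ∧
      ∫ x, parallelSum u v x * parallelSumSource a u u' v v' x ≤ W / 3 := by
  have hG := hasDerivAt_parallelSum_mul_source_primitive hu hv (fun x => (ha x).ne') hW
  have hG_mem x : -(W / 3) * (3 * (u x / (u x + v x)) ^ 2 - 2 * (u x / (u x + v x)) ^ 3) ∈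
      Set.Icc (-(W / 3)) 0 := by
    have hsum := add_pos (hu.pos x) (hv.pos x)
    have h0 : 0 ≤ u x / (u x + v x) := (div_pos (hu.pos x) hsum).le
    have h1 : u x / (u x + v x) ≤ 1 := (div_le_one hsum).2 (by linarith [hv.pos x])
    generalize u x / (u x + v x) = s at h0 h1
    have hlo : 0 ≤ 3 * s ^ 2 - 2 * s ^ 3 := by nlinarith [sq_nonneg s]
    have hhi : 3 * s ^ 2 - 2 * s ^ 3 ≤ 1 := by nlinarith [sq_nonneg (1 - s)]
    constructor <;> nlinarith
  have hnonneg := parallelSum_mul_source_nonneg hu hv ha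
  exact ⟨integrable_of_hasDerivAt_of_mem_Icc hG hnonneg hG_mem, by
    simpa using integral_le_of_hasDerivAt_of_mem_Icc hG hnonneg hG_mem⟩

end ParallelSum

section UpperBound

variable {a r u u' v v' : ℝ → ℝ} {β ρ γ k : ℝ}

lemma bddAbove_range_parallelSum {q : ℝ → ℝ} (hu : IsPositiveSolution a q u u')
    (hv : IsPositiveSolution a q v v') (hutop : IsBoundedUnder (· ≤ ·) atTop u)
    (hvbot : IsBoundedUnder (· ≤ ·) atBot v) : BddAbove (Set.range (parallelSum u v)) :=
  bddAbove_range_of_isBoundedUnder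
    (continuous_iff_continuousAt.2 fun x => (hasDerivAt_parallelSum hu hv x).continuousAt)
    (hutop.mono_le (.of_forall fun x => parallelSum_le_left (hu.pos x) (hv.pos x)))
    (hvbot.mono_le (.of_forall fun x => parallelSum_le_right (hu.pos x) (hv.pos x)))

lemma gap_mul_sq_le_wronskian_of_forall_le {m x₀ : ℝ} (hac : Continuous a) (hrc : Continuous r)
    (ha : ∀ x, 0 < a x) (haβ : ∀ x, a x ≤ β) (hr : ∀ x, r x ≤ ρ) (hγ : gammaBar a r < γ)
    (hu : IsPositiveSolution a (fun x => γ - r x) u u')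
    (hv : IsPositiveSolution a (fun x => γ - r x) v v')
    (hutop : IsBoundedUnder (· ≤ ·) atTop u) (hvbot : IsBoundedUnder (· ≤ ·) atBot v)
    (hm : 0 < m) (hmu : ∀ x, |x - x₀| ≤ 1 → m ≤ u x) (hmv : ∀ x, |x - x₀| ≤ 1 → m ≤ v x) :
    (γ - gammaBar a r) * (m ^ 2 / 2) ≤ wronskian a u u' v v' x₀ / 3 := by
  have ha0 x : a x ≠ 0 := (ha x).ne'
  have hsum x : u x + v x ≠ 0 := (add_pos (hu.pos x) (hv.pos x)).ne'
  have huc := hu.continuous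
  have hvc := hv.continuous
  have hu'c := hu.continuous_deriv hac ha0
  have hv'c := hv.continuous_deriv hac ha0
  have hfc : Continuous (parallelSumSource a u u' v v') := by
    unfold parallelSumSource wronskian
    exact Continuous.div (by fun_prop) (by fun_prop)
      fun x => mul_ne_zero (ha0 x) (pow_ne_zero 3 (hsum x))
  have hflux := hasDerivAt_flux_parallelSum hu hv ha0
  obtain ⟨Z, hZ⟩ := bddAbove_range_parallelSum hu hv hutop hvbot
  have hz0 x : 0 ≤ parallelSum u v x :=
    (div_pos (mul_pos (hu.pos x) (hv.pos x)) (add_pos (hu.pos x) (hv.pos x))).le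
  have hW := wronskian_pos hac hrc ha haβ hr hγ hu hv hutop hvbot x₀
  obtain ⟨hint, hle⟩ := integral_parallelSum_mul_source_le hu hv ha
    (fun x => wronskian_eq hu hv x x₀) hW.le
  calc (γ - gammaBar a r) * (m ^ 2 / 2) = (γ - gammaBar a r) * (2 * (m / 2) ^ 2) := by ring
    _ ≤ ∫ x, parallelSum u v x * parallelSumSource a u u' v v' x :=
        gap_mul_sq_le hac hrc (fun x => (ha x).le) haβ hr hγ.le hfc
          (continuous_of_hasDerivAt_mul hac ha0 hflux) (hasDerivAt_parallelSum hu hv) hflux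
          (fun x => (abs_of_nonneg (hz0 x)).trans_le (hZ ⟨x, rfl⟩))
          (parallelSum_mul_source_nonneg hu hv ha) hint (half_pos hm).le
          fun x hx => half_le_parallelSum hm (hmu x hx) (hmv x hx)
    _ ≤ wronskian a u u' v v' x₀ / 3 := hle

lemma gap_mul_mul_le_wronskian (hac : Continuous a) (hrc : Continuous r)
    (ha : ∀ x, 0 < a x) (haβ : ∀ x, a x ≤ β) (hr : ∀ x, r x ≤ ρ) (hγ : gammaBar a r < γ)
    (hu : IsPositiveSolution a (fun x => γ - r x) u u')
    (hv : IsPositiveSolution a (fun x => γ - r x) v v')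
    (hutop : IsBoundedUnder (· ≤ ·) atTop u) (hvbot : IsBoundedUnder (· ≤ ·) atBot v)
    (huk : ∀ x, |u' x| ≤ k * u x) (hvk : ∀ x, |v' x| ≤ k * v x) (x₀ : ℝ) :
    (γ - gammaBar a r) * (Real.exp (-k) ^ 2 * (u x₀ * v x₀) / 2) ≤
      wronskian a u u' v v' x₀ / 3 := by
  have hk : 0 ≤ k := nonneg_of_mul_nonneg_left ((abs_nonneg _).trans (huk x₀)) (hu.pos x₀)
  have harnack {w w' : ℝ → ℝ} (hw : IsPositiveSolution a (fun x => γ - r x) w w')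
      (hwk : ∀ x, |w' x| ≤ k * w x) x (hx : |x - x₀| ≤ 1) : Real.exp (-k) * w x₀ ≤ w x := by
    have hexp : Real.exp (-k) ≤ Real.exp (-(k * |x - x₀|)) :=
      Real.exp_le_exp.2 (neg_le_neg (mul_le_of_le_one_right hk hx))
    exact (mul_le_mul_of_nonneg_right hexp (hw.pos x₀).le).trans
      (exp_neg_mul_abs_sub_mul_le hw.pos hw.hasDerivAt hwk x x₀)
  set c := u x₀ / v x₀
  have hc : 0 < c := div_pos (hu.pos x₀) (hv.pos x₀)
  have hcv : c * v x₀ = u x₀ := div_mul_cancel₀ _ (hv.pos x₀).ne'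
  have hscaled := gap_mul_sq_le_wronskian_of_forall_le hac hrc ha haβ hr hγ hu (hv.const_mul hc)
    hutop ((monotone_mul_left_of_nonneg hc.le).isBoundedUnder_le_comp hvbot)
    (mul_pos (Real.exp_pos (-k)) (hu.pos x₀)) (harnack hu huk) fun x hx => by
      rw [← hcv, mul_left_comm]
      exact mul_le_mul_of_nonneg_left (harnack hv hvk x hx) hc.le
  rw [wronskian_const_mul] at hscaled
  refine le_of_mul_le_mul_left ?_ hc
  calc c * ((γ - gammaBar a r) * (Real.exp (-k) ^ 2 * (u x₀ * v x₀) / 2))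
      = (γ - gammaBar a r) * ((Real.exp (-k) * u x₀) ^ 2 / 2) := by rw [← hcv]; ring
    _ ≤ c * wronskian a u u' v v' x₀ / 3 := hscaled
    _ = c * (wronskian a u u' v v' x₀ / 3) := mul_div_assoc _ _ _

end UpperBound

theorem invariant_measure_elliptic_general {a r u u' v v' : ℝ → ℝ} {α β ρ γ : ℝ}
    (hac : Continuous a) (hrc : Continuous r) (hα : 0 < α) (ha : ∀ x, α ≤ a x ∧ a x ≤ β)
    (hr : ∀ x, |r x| ≤ ρ) (hγ : gammaBar a r < γ)
    (hu : IsPositiveSolution a (fun x => γ - r x) u u')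
    (hv : IsPositiveSolution a (fun x => γ - r x) v v')
    (hutop : IsBoundedUnder (· ≤ ·) atTop u) (hvbot : IsBoundedUnder (· ≤ ·) atBot v) :
    (∃ c : ℝ, 0 < c ∧ ∀ x : ℝ, c ≤ u x * v x) ∧ (∃ Cb : ℝ, ∀ x : ℝ, u x * v x ≤ Cb) := by
  have hα_le x : α ≤ a x := (ha x).1
  have ha_pos x : 0 < a x := hα.trans_le (hα_le x)
  have ha_le x : a x ≤ β := (ha x).2
  have hr_le x : r x ≤ ρ := (le_abs_self _).trans (hr x)
  have hq_le x : γ - r x ≤ γ + ρ := by linarith [neg_le_of_abs_le (hr x)]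
  obtain ⟨K, hMK, hK⟩ : ∃ K : ℝ, (γ + ρ) * β < K ^ 2 ∧ 0 < K :=
    (((tendsto_pow_atTop two_ne_zero).eventually_gt_atTop _).and (eventually_gt_atTop 0)).exists
  have hW := wronskian_pos hac hrc ha_pos ha_le hr_le hγ hu hv hutop hvbot 0
  refine ⟨⟨wronskian a u u' v v' 0 / (2 * K), by positivity, fun x => ?_⟩,
    ⟨wronskian a u u' v v' 0 / 3 / ((γ - gammaBar a r) * (Real.exp (-(K / α)) ^ 2 / 2)),
      fun x => ?_⟩⟩
  · rw [div_le_iff₀' (by positivity), wronskian_eq hu hv 0 x]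
    exact wronskian_le hu hv ha_pos ha_le hq_le hK.le hMK x
  · have : 0 < γ - gammaBar a r := sub_pos.2 hγ
    rw [le_div_iff₀' (by positivity), wronskian_eq hu hv 0 x]
    have := gap_mul_mul_le_wronskian hac hrc ha_pos ha_le hr_le hγ hu hv hutop hvbot
      (hu.abs_deriv_le hα hα_le ha_le hq_le hK.le hMK)
      (hv.abs_deriv_le hα hα_le ha_le hq_le hK.le hMK) x
    linarith

/-- Proposition 6.2: the invariant measure `ν_γ = φ_γ·φ̃_γ` has positive infimum and is
bounded above on `ℝ`. -/
theorem invariant_measure_elliptic (μ : ℝ) (hμ : 1 ≤ μ) (a r : ℝ → ℝ)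
    (hac : Continuous a) (hrc : Continuous r)
    (ha : ∀ x, 1 / μ ≤ a x ∧ a x ≤ μ) (hr : ∀ x, |r x| ≤ μ)
    (γ : ℝ) (hγ : gammaBar a r < γ)
    (φ φ' φt φt' : ℝ → ℝ)
    (hφ : IsGenPrincEig a r γ Filter.atTop φ φ')
    (hφt : IsGenPrincEig a r γ Filter.atBot φt φt') :
    (∃ c : ℝ, 0 < c ∧ ∀ x : ℝ, c ≤ φ x * φt x) ∧
    (∃ Cb : ℝ, ∀ x : ℝ, φ x * φt x ≤ Cb) :=
  invariant_measure_elliptic_general hac hrc (one_div_pos.2 (one_pos.trans_le hμ)) ha hr hγ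
    hφ.isPositiveSolution hφt.isPositiveSolution hφ.isBoundedUnder_le hφt.isBoundedUnder_le
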